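/- arXiv:2304.07664 — 2 statements merged into one kernel-verified Lean document; each statement's English description precedes it below -/
import Mathlib

section
/- For every y ∈ (0,1), the numbers j(y) and k(y) are both strictly positive. -/
/-! On `(0,1)` both `g` and `h` are negative. The strict inequality `1 - 1/x < log x` for
`x ∈ (0,1)` makes the numerator of the derivative of `h` negative, so `h` has negative derivative
there, and the reflection `g(y) = h(1 - y)` gives `g` a positive one. Hence `W` is a positive
product minus a negative one, so `W > 0`, and the quotients `j` and `k` are positive. -/

noncomputable def gFun (y : ℝ) : ℝ := y / Real.log (1 - y)

noncomputable def hFun (y : ℝ) : ℝ := (1 - y) / Real.log y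

/-- Wronskian of `g` and `h`. -/
noncomputable def WFun (y : ℝ) : ℝ := gFun y * deriv hFun y - deriv gFun y * hFun y

noncomputable def jFun (y : ℝ) : ℝ := -deriv hFun y / WFun y

noncomputable def kFun (y : ℝ) : ℝ := deriv gFun y / WFun y

theorem one_sub_inv_lt_log {x : ℝ} (hx0 : 0 < x) (hx1 : x < 1) : 1 - x⁻¹ < Real.log x := by
  have hne : x⁻¹ ≠ 1 := by
    intro h
    rw [inv_eq_one] at h
    linarith
  have h := Real.log_lt_sub_one_of_pos (inv_pos.mpr hx0) hne
  rw [Real.log_inv] at h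
  linarith

theorem deriv_hFun_neg {y : ℝ} (h0 : 0 < y) (h1 : y < 1) : deriv hFun y < 0 := by
  have hlog : Real.log y < 0 := Real.log_neg h0 h1
  have hd : HasDerivAt hFun
      (((-1) * Real.log y - (1 - y) * y⁻¹) / Real.log y ^ 2) y :=
    ((hasDerivAt_id y).const_sub 1).div (Real.hasDerivAt_log h0.ne') hlog.ne
  rw [hd.deriv]
  have hb := one_sub_inv_lt_log h0 h1
  have hm : y * y⁻¹ = 1 := mul_inv_cancel₀ h0.ne'
  exact div_neg_of_neg_of_pos (by linarith) (sq_pos_of_neg hlog)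

/-- The reflection `g(y) = h(1 - y)` reduces the sign of `g'` to that of `h'`. -/
theorem deriv_gFun_pos {y : ℝ} (h0 : 0 < y) (h1 : y < 1) : 0 < deriv gFun y := by
  have hg : gFun = fun t => hFun (1 - t) := by
    funext t
    simp [gFun, hFun]
  have h := deriv_hFun_neg (y := 1 - y) (by linarith) (by linarith)
  rw [hg, deriv_comp_const_sub]
  linarith

/-- For every `y ∈ (0,1)`, `j(y)` and `k(y)` are strictly positive. -/
theorem stmt_10 (y : ℝ) (hy : y ∈ Set.Ioo (0 : ℝ) 1) :
    0 < jFun y ∧ 0 < kFun y := by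
  obtain ⟨h0, h1⟩ := hy
  have hg : gFun y < 0 :=
    div_neg_of_pos_of_neg h0 (Real.log_neg (by linarith) (by linarith))
  have hh : hFun y < 0 := div_neg_of_pos_of_neg (by linarith) (Real.log_neg h0 h1)
  have hg' := deriv_gFun_pos h0 h1
  have hh' := deriv_hFun_neg h0 h1
  have hW : 0 < WFun y :=
    sub_pos.mpr ((mul_neg_of_pos_of_neg hg' hh).trans (mul_pos_of_neg_of_neg hg hh'))
  exact ⟨div_pos (neg_pos.mpr hh') hW, div_pos hg' hW⟩
end

section
/- The function j is strictly monotonically decreasing on (0,1) with j(y) → 1 as y → 0⁺ and j(y) → 0 as y → 1⁻, and the function k is strictly monotonically increasing on (0,1) with k(y) → 0 as y → 0⁺ and k(y) → 1 as y → 1⁻. -/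
open Set Filter Topology

/-- The function `(u - 1) / log u`, the common building block of `gFun` and `hFun`. -/
noncomputable def auxH (u : ℝ) : ℝ := (u - 1) / Real.log u

/-- The closed form of the derivative of `auxH` on `(0,1)`. -/
noncomputable def auxD (u : ℝ) : ℝ := (Real.log u - 1 + 1 / u) / Real.log u ^ 2

theorem hasDerivAt_auxH {u : ℝ} (hu : u ∈ Ioo (0 : ℝ) 1) : HasDerivAt auxH (auxD u) u := by
  have hl : Real.log u < 0 := Real.log_neg hu.1 hu.2
  have h1 := ((hasDerivAt_id u).sub_const 1).div (Real.hasDerivAt_log hu.1.ne') hl.ne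
  refine h1.congr_deriv ?_
  have := hu.1.ne'
  simp only [auxD, id]
  field_simp
  ring

theorem log_lower {u : ℝ} (hu : u ∈ Ioo (0 : ℝ) 1) : 0 < Real.log u - 1 + 1 / u := by
  have h := Real.log_lt_sub_one_of_pos (inv_pos.2 hu.1) (fun h => hu.2.ne (inv_eq_one.1 h))
  rw [Real.log_inv] at h
  rw [one_div]
  linarith

theorem auxD_pos {u : ℝ} (hu : u ∈ Ioo (0 : ℝ) 1) : 0 < auxD u :=
  div_pos (log_lower hu) (sq_pos_of_neg (Real.log_neg hu.1 hu.2))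

theorem auxH_pos {u : ℝ} (hu : u ∈ Ioo (0 : ℝ) 1) : 0 < auxH u :=
  div_pos_of_neg_of_neg (by linarith [hu.2]) (Real.log_neg hu.1 hu.2)

theorem log_upper {u : ℝ} (hu : u ∈ Ioo (0 : ℝ) 1) : (u + 1) * Real.log u < 2 * (u - 1) := by
  have hd : ∀ x : ℝ, 0 < x → HasDerivAt (fun x => 2 * (x - 1) - (x + 1) * Real.log x)
      (2 * 1 - (1 * Real.log x + (x + 1) * x⁻¹)) x := fun x hx =>
    (((hasDerivAt_id x).sub_const 1).const_mul 2).sub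
      (((hasDerivAt_id x).add_const 1).mul (Real.hasDerivAt_log hx.ne'))
  have hanti : StrictAntiOn (fun x => 2 * (x - 1) - (x + 1) * Real.log x) (Ioc (0 : ℝ) 1) := by
    refine strictAntiOn_of_deriv_neg (convex_Ioc 0 1)
      (fun x hx => (hd x hx.1).continuousAt.continuousWithinAt) ?_
    intro x hx
    rw [interior_Ioc] at hx
    rw [(hd x hx.1).deriv]
    have h1 := log_lower hx
    have h2 : (x + 1) * x⁻¹ = 1 + 1 / x := by
      have := hx.1.ne'
      field_simp
    linarith
  have := hanti ⟨hu.1, hu.2.le⟩ ⟨one_pos, le_refl 1⟩ hu.2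
  simp at this
  linarith

theorem auxD_strictAntiOn : StrictAntiOn auxD (Ioo (0 : ℝ) 1) := by
  have hd : ∀ u ∈ Ioo (0 : ℝ) 1, HasDerivAt auxD
      ((2 * (u - 1) - (u + 1) * Real.log u) / (u ^ 2 * Real.log u ^ 3)) u := by
    intro u hu
    have hl : Real.log u ≠ 0 := (Real.log_neg hu.1 hu.2).ne
    have hu0 := hu.1.ne'
    have hlog := Real.hasDerivAt_log hu0
    have h1 := ((hlog.sub_const 1).add ((hasDerivAt_const u (1 : ℝ)).div (hasDerivAt_id u) hu0)).div
      (hlog.pow 2) (pow_ne_zero 2 hl)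
    refine h1.congr_deriv ?_
    simp
    field_simp
    ring
  refine strictAntiOn_of_deriv_neg (convex_Ioo 0 1)
    (fun x hx => (hd x hx).continuousAt.continuousWithinAt) ?_
  intro u hu
  rw [interior_Ioo] at hu
  rw [(hd u hu).deriv]
  have hl : Real.log u < 0 := Real.log_neg hu.1 hu.2
  refine div_neg_of_pos_of_neg (by linarith [log_upper hu]) ?_
  exact mul_neg_of_pos_of_neg (pow_pos hu.1 2) (Odd.pow_neg (by decide) hl)

/-- By concavity the graph of `auxH` lies below its tangents. -/
theorem auxH_le_tangent {x y : ℝ} (hx : x ∈ Ioo (0 : ℝ) 1) (hy : y ∈ Ioo (0 : ℝ) 1) :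
    auxH x ≤ auxH y + auxD y * (x - y) := by
  have key : ∀ a b : ℝ, a ∈ Ioo (0 : ℝ) 1 → b ∈ Ioo (0 : ℝ) 1 → a < b →
      ∃ c ∈ Ioo a b, c ∈ Ioo (0 : ℝ) 1 ∧ auxH b - auxH a = auxD c * (b - a) := by
    intro a b ha hb hab
    have hsub : Icc a b ⊆ Ioo (0 : ℝ) 1 := fun z hz =>
      ⟨ha.1.trans_le hz.1, hz.2.trans_lt hb.2⟩
    obtain ⟨c, hc, h⟩ := exists_hasDerivAt_eq_slope auxH auxD hab
      (fun z hz => (hasDerivAt_auxH (hsub hz)).continuousAt.continuousWithinAt)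
      (fun z hz => hasDerivAt_auxH (hsub (Ioo_subset_Icc_self hz)))
    refine ⟨c, hc, hsub (Ioo_subset_Icc_self hc), ?_⟩
    rw [h, div_mul_cancel₀ _ (sub_ne_zero.2 hab.ne')]
  rcases lt_trichotomy x y with h | h | h
  · obtain ⟨c, hc, hc', e⟩ := key x y hx hy h
    nlinarith [auxD_strictAntiOn hc' hy hc.2]
  · subst h; simp
  · obtain ⟨c, hc, hc', e⟩ := key y x hy hx h
    nlinarith [auxD_strictAntiOn hy hc' hc.1]

theorem refl_mem {y : ℝ} (hy : y ∈ Ioo (0 : ℝ) 1) : 1 - y ∈ Ioo (0 : ℝ) 1 :=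
  ⟨by linarith [hy.2], by linarith [hy.1]⟩

theorem hFun_eq : hFun = fun y => -auxH y := by
  funext y
  rw [hFun, auxH, ← neg_div, neg_sub]

theorem gFun_eq : gFun = fun y => -auxH (1 - y) := by
  funext y
  rw [gFun, auxH, ← neg_div]
  ring_nf

theorem deriv_hFun {y : ℝ} (hy : y ∈ Ioo (0 : ℝ) 1) : deriv hFun y = -auxD y := by
  rw [hFun_eq]
  exact (hasDerivAt_auxH hy).neg.deriv

theorem deriv_gFun {y : ℝ} (hy : y ∈ Ioo (0 : ℝ) 1) : deriv gFun y = auxD (1 - y) := by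
  rw [gFun_eq]
  have h := ((hasDerivAt_auxH (refl_mem hy)).comp y ((hasDerivAt_id y).const_sub 1)).neg
  exact (h.congr_deriv (by ring)).deriv

theorem WFun_eq {y : ℝ} (hy : y ∈ Ioo (0 : ℝ) 1) :
    WFun y = auxH (1 - y) * auxD y + auxD (1 - y) * auxH y := by
  rw [WFun, deriv_hFun hy, deriv_gFun hy, gFun_eq, hFun_eq]
  ring

theorem jFun_eq {y : ℝ} (hy : y ∈ Ioo (0 : ℝ) 1) :
    jFun y = auxD y / (auxH (1 - y) * auxD y + auxD (1 - y) * auxH y) := by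
  rw [jFun, WFun_eq hy, deriv_hFun hy, neg_neg]

theorem kFun_eq {y : ℝ} (hy : y ∈ Ioo (0 : ℝ) 1) : kFun y = jFun (1 - y) := by
  rw [jFun_eq (refl_mem hy), kFun, WFun_eq hy, deriv_gFun hy, sub_sub_cancel]
  ring

theorem jFun_strictAntiOn : StrictAntiOn jFun (Ioo (0 : ℝ) 1) := by
  intro x hx y hy hxy
  have hx' := refl_mem hx
  have hy' := refl_mem hy
  rw [jFun_eq hx, jFun_eq hy]
  have Dx := auxD_pos hx
  have Dy := auxD_pos hy
  have Dx' := auxD_pos hx'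
  have Dy' := auxD_pos hy'
  have Hx := auxH_pos hx
  have Hy := auxH_pos hy
  have Hx' := auxH_pos hx'
  have Hy' := auxH_pos hy'
  rw [div_lt_div_iff₀ (by positivity) (by positivity)]
  -- `y` maximises `z ↦ D y * H (1 - z) + D (1 - y) * H z`
  have hmax : auxD y * auxH (1 - x) + auxD (1 - y) * auxH x
      ≤ auxD y * auxH (1 - y) + auxD (1 - y) * auxH y := by
    have h1 := mul_le_mul_of_nonneg_left (auxH_le_tangent hx hy) Dy'.le
    have h2 := mul_le_mul_of_nonneg_left (auxH_le_tangent hx' hy') Dy.le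
    linarith
  have hm : auxD y * auxD (1 - x) < auxD x * auxD (1 - y) :=
    mul_lt_mul'' (auxD_strictAntiOn hx hy hxy)
      (auxD_strictAntiOn hy' hx' (by linarith)) Dy.le Dx'.le
  have h3 := mul_le_mul_of_nonneg_left hmax Dx.le
  have h4 := mul_lt_mul_of_pos_right hm Hx
  linarith

theorem auxH_tendsto_zero : Tendsto auxH (𝓝[>] 0) (𝓝 0) := by
  have h : Tendsto (fun u : ℝ => u - 1) (𝓝[>] 0) (𝓝 (0 - 1)) :=
    ((continuous_id.sub continuous_const).tendsto (0 : ℝ)).mono_left nhdsWithin_le_nhds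
  exact h.div_atBot Real.tendsto_log_nhdsGT_zero

theorem Ioo_mem_zero : Ioo (0 : ℝ) 1 ∈ 𝓝[>] (0 : ℝ) := Ioo_mem_nhdsGT one_pos

theorem Ioo_mem_one : Ioo (0 : ℝ) 1 ∈ 𝓝[<] (1 : ℝ) := Ioo_mem_nhdsLT one_pos

theorem auxH_tendsto_one : Tendsto auxH (𝓝[<] 1) (𝓝 1) := by
  refine tendsto_of_tendsto_of_tendsto_of_le_of_le' (g := fun u : ℝ => u)
    (tendsto_id.mono_left nhdsWithin_le_nhds) tendsto_const_nhds ?_ ?_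
  · filter_upwards [Ioo_mem_one] with u hu
    have h := mul_pos hu.1 (log_lower hu)
    rw [mul_add, mul_one_div_cancel hu.1.ne'] at h
    rw [auxH, le_div_iff_of_neg (Real.log_neg hu.1 hu.2)]
    linarith
  · filter_upwards [Ioo_mem_one] with u hu
    rw [auxH, div_le_one_of_neg (Real.log_neg hu.1 hu.2)]
    exact Real.log_le_sub_one_of_pos hu.1

theorem auxD_tendsto_atTop : Tendsto auxD (𝓝[>] 0) atTop := by
  have hid : Tendsto (fun u : ℝ => u) (𝓝[>] 0) (𝓝 0) := tendsto_id.mono_left nhdsWithin_le_nhds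
  have h1 : Tendsto (fun u : ℝ => Real.log u * u) (𝓝[>] 0) (𝓝 0) := by
    simpa using tendsto_log_mul_rpow_nhdsGT_zero one_pos
  have h2 : Tendsto (fun u : ℝ => (Real.log u * u ^ (1 / 2 : ℝ)) ^ 2) (𝓝[>] 0) (𝓝 0) := by
    simpa using (tendsto_log_mul_rpow_nhdsGT_zero (r := 1 / 2) (by norm_num)).pow 2
  have hnum : Tendsto (fun u : ℝ => Real.log u * u - u + 1) (𝓝[>] 0) (𝓝 1) := by
    simpa using (h1.sub hid).add_const 1
  have hden : Tendsto (fun u : ℝ => ((Real.log u * u ^ (1 / 2 : ℝ)) ^ 2)⁻¹) (𝓝[>] 0) atTop := by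
    refine Tendsto.inv_tendsto_nhdsGT_zero (tendsto_nhdsWithin_iff.2 ⟨h2, ?_⟩)
    filter_upwards [Ioo_mem_zero] with u hu
    have := (Real.log_neg hu.1 hu.2).ne
    have := Real.rpow_pos_of_pos hu.1 (1 / 2)
    simp only [mem_Ioi]
    positivity
  refine (hnum.pos_mul_atTop one_pos hden).congr' ?_
  filter_upwards [Ioo_mem_zero] with u hu
  have hl := (Real.log_neg hu.1 hu.2).ne
  have hs : (u ^ (1 / 2 : ℝ)) ^ 2 = u := by
    rw [← Real.sqrt_eq_rpow, Real.sq_sqrt hu.1.le]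
  have hu0 := hu.1.ne'
  rw [mul_pow, hs, auxD]
  field_simp

theorem tendsto_refl_zero : Tendsto (fun y : ℝ => 1 - y) (𝓝[>] 0) (𝓝[<] 1) := by
  refine tendsto_nhdsWithin_iff.2 ⟨?_, ?_⟩
  · have h : Tendsto (fun y : ℝ => 1 - y) (𝓝 0) (𝓝 (1 - 0)) :=
      (continuous_const.sub continuous_id).tendsto 0
    rw [sub_zero] at h
    exact h.mono_left nhdsWithin_le_nhds
  · filter_upwards [Ioo_mem_zero] with y hy using (refl_mem hy).2

theorem tendsto_refl_one : Tendsto (fun y : ℝ => 1 - y) (𝓝[<] 1) (𝓝[>] 0) := by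
  refine tendsto_nhdsWithin_iff.2 ⟨?_, ?_⟩
  · have h : Tendsto (fun y : ℝ => 1 - y) (𝓝 1) (𝓝 (1 - 1)) :=
      (continuous_const.sub continuous_id).tendsto 1
    rw [sub_self] at h
    exact h.mono_left nhdsWithin_le_nhds
  · filter_upwards [Ioo_mem_one] with y hy using (refl_mem hy).1

theorem jFun_tendsto_zero : Tendsto jFun (𝓝[>] 0) (𝓝 1) := by
  have hH' := auxH_tendsto_one.comp tendsto_refl_zero
  have hlow : Tendsto (fun y => (auxH (1 - y) + auxH y)⁻¹) (𝓝[>] 0) (𝓝 1) := by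
    simpa using (hH'.add auxH_tendsto_zero).inv₀ (by norm_num)
  have hup : Tendsto (fun y => (auxH (1 - y))⁻¹) (𝓝[>] 0) (𝓝 1) := by
    simpa using hH'.inv₀ one_ne_zero
  have hhalf : Ioo (0 : ℝ) (1 / 2) ∈ 𝓝[>] (0 : ℝ) := Ioo_mem_nhdsGT (by norm_num)
  refine tendsto_of_tendsto_of_tendsto_of_le_of_le' hlow hup ?_ ?_
  · filter_upwards [Ioo_mem_zero, hhalf] with y hy hy2
    have hy' := refl_mem hy
    have D := auxD_pos hy
    have D' := auxD_pos hy'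
    have H := auxH_pos hy
    have H' := auxH_pos hy'
    have hD : auxD (1 - y) < auxD y := auxD_strictAntiOn hy hy' (by linarith [hy2.2])
    rw [jFun_eq hy, inv_eq_one_div, div_le_div_iff₀ (by positivity) (by positivity)]
    nlinarith
  · filter_upwards [Ioo_mem_zero] with y hy
    have hy' := refl_mem hy
    have D := auxD_pos hy
    have D' := auxD_pos hy'
    have H := auxH_pos hy
    have H' := auxH_pos hy'
    rw [jFun_eq hy, inv_eq_one_div, div_le_div_iff₀ (by positivity) (by positivity)]
    nlinarith [mul_pos D' H]

theorem jFun_tendsto_one : Tendsto jFun (𝓝[<] 1) (𝓝 0) := by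
  have hD := auxD_tendsto_atTop.comp tendsto_refl_one
  have hup : Tendsto (fun y => auxD (1 / 2) / (auxD (1 - y) * auxH y)) (𝓝[<] 1) (𝓝 0) :=
    (hD.atTop_mul_pos one_pos auxH_tendsto_one).const_div_atTop _
  have hhalf : Ioo (1 / 2 : ℝ) 1 ∈ 𝓝[<] (1 : ℝ) := Ioo_mem_nhdsLT (by norm_num)
  refine tendsto_of_tendsto_of_tendsto_of_le_of_le' tendsto_const_nhds hup ?_ ?_
  · filter_upwards [Ioo_mem_one] with y hy
    have D := auxD_pos hy
    have D' := auxD_pos (refl_mem hy)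
    have H := auxH_pos hy
    have H' := auxH_pos (refl_mem hy)
    rw [jFun_eq hy]
    positivity
  · filter_upwards [Ioo_mem_one, hhalf] with y hy hy2
    have D := auxD_pos hy
    have D' := auxD_pos (refl_mem hy)
    have H := auxH_pos hy
    have H' := auxH_pos (refl_mem hy)
    have hlt : auxD y < auxD (1 / 2) :=
      auxD_strictAntiOn ⟨by norm_num, by norm_num⟩ hy hy2.1
    rw [jFun_eq hy]
    exact div_le_div₀ (D.trans hlt).le hlt.le (mul_pos D' H)
      (le_add_of_nonneg_left (mul_pos H' D).le)

/-- `j` strictly decreases on `(0,1)` from `1` (at `0⁺`) to `0` (at `1⁻`), and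
`k` strictly increases on `(0,1)` from `0` (at `0⁺`) to `1` (at `1⁻`). -/
theorem stmt_11 :
    StrictAntiOn jFun (Set.Ioo (0 : ℝ) 1) ∧
    Filter.Tendsto jFun (nhdsWithin 0 (Set.Ioi 0)) (nhds 1) ∧
    Filter.Tendsto jFun (nhdsWithin 1 (Set.Iio 1)) (nhds 0) ∧
    StrictMonoOn kFun (Set.Ioo (0 : ℝ) 1) ∧
    Filter.Tendsto kFun (nhdsWithin 0 (Set.Ioi 0)) (nhds 0) ∧
    Filter.Tendsto kFun (nhdsWithin 1 (Set.Iio 1)) (nhds 1) := by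
  refine ⟨jFun_strictAntiOn, jFun_tendsto_zero, jFun_tendsto_one, ?_, ?_, ?_⟩
  · intro x hx y hy hxy
    rw [kFun_eq hx, kFun_eq hy]
    exact jFun_strictAntiOn (refl_mem hy) (refl_mem hx) (by linarith)
  · refine (jFun_tendsto_one.comp tendsto_refl_zero).congr' ?_
    filter_upwards [Ioo_mem_zero] with y hy using (kFun_eq hy).symm
  · refine (jFun_tendsto_zero.comp tendsto_refl_one).congr' ?_
    filter_upwards [Ioo_mem_one] with y hy using (kFun_eq hy).symm
end
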